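/- Let μ > −1, −μ−1 < ν ≤ 0 and 0 < β < 1. Then the lower bound (1/(1−β))·( e^{−βx} x^ν t̃_{μ,ν}(x) − B_{μ,ν,β}(x) ) is tight as x → ∞: the ratio of this expression to ∫_0^x e^{−βu} u^ν t̃_{μ,ν}(u) du tends to 1 as x → ∞. -/

import Mathlib

/-!
Write `f x = x ^ ν * lommel μ ν x = ∑ aₖ x ^ nₖ` for `x > 0`, where `nₖ = μ + ν + 1 + 2k > 0` and
`aₖ > 0`. With `m = -ν ≥ 0`, the functional equation of the Gamma function gives the recurrence
`nₖ₊₁ (nₖ₊₁ + 2m) aₖ₊₁ = aₖ` (`lommelCoeff_rec`), which expresses the modified Lommel differential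
equation on the level of coefficients.

The key point is that `f' = (1 + O(1/x)) f`. Let `Sⱼ = ∑ nₖ ^ j aₖ x ^ nₖ`, so that `S₀ = f` and
`S₁ = x f'`. The recurrence gives `S₂ + 2m S₁ = x² S₀ + O(S₀)` and `S₃ ≤ x² (S₁ + 2 S₀) + O(S₀)`.
Since the terms are nonnegative, `∑ (nₖ - x)² aₖ x ^ nₖ ≥ 0` and `∑ nₖ (nₖ - x)² aₖ x ^ nₖ ≥ 0`;
expanding these squares bounds `S₁ - x S₀` from above and from below by a multiple of `S₀`
(`moment_bound`).

Consequently `g x = exp (-βx) f x` satisfies `g' = (1 - β + O(1/x)) g`. Then `G x = ∫₀ˣ g` tends to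
infinity and `g - (1 - β) G = o(G)`, by comparing derivatives (`tendsto_ratio`). The term `Bconst`
converges to a constant, so it does not affect the ratio.
-/

open Real MeasureTheory

/-- Normalised modified Lommel function of the first kind. -/
noncomputable def lommel (μ ν x : ℝ) : ℝ :=
  ∑' k : ℕ, (x / 2) ^ (μ + 2 * (k : ℝ) + 1) /
    (Real.Gamma ((k : ℝ) + (μ - ν + 3) / 2) * Real.Gamma ((k : ℝ) + (μ + ν + 3) / 2))

/-- Lower incomplete gamma function. -/
noncomputable def lowerGamma (a x : ℝ) : ℝ :=
  ∫ u in (0:ℝ)..x, Real.exp (-u) * u ^ (a - 1)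

noncomputable def Bconst (μ ν β x : ℝ) : ℝ :=
  β ^ (-μ - ν - 1) * lowerGamma (μ + ν + 1) (β * x) /
    (2 ^ μ * Real.Gamma ((μ - ν + 1) / 2) * Real.Gamma ((μ + ν + 3) / 2))

/-! ### Moments of a series with Bessel-type recurrence -/

/-- The `k`-th term `a k * x ^ (p + 2k)` of a generalised power series in steps of two. -/
noncomputable def serTerm (p : ℝ) (a : ℕ → ℝ) (x : ℝ) (k : ℕ) : ℝ :=
  a k * x ^ (p + 2 * (k : ℝ))

lemma serTerm_pos {p : ℝ} {a : ℕ → ℝ} (ha : ∀ k, 0 < a k) {x : ℝ} (hx : 0 < x) (k : ℕ) :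
    0 < serTerm p a x k :=
  mul_pos (ha k) (rpow_pos_of_pos hx _)

lemma serTerm_rec {p m : ℝ} {a : ℕ → ℝ}
    (hrec : ∀ k : ℕ, (p + 2 * ((k : ℝ) + 1)) * (p + 2 * ((k : ℝ) + 1) + 2 * m) * a (k + 1) = a k)
    {x : ℝ} (hx : 0 < x) (k : ℕ) :
    (p + 2 * ((k : ℝ) + 1)) * (p + 2 * ((k : ℝ) + 1) + 2 * m) * serTerm p a x (k + 1)
      = x ^ 2 * serTerm p a x k := by
  unfold serTerm
  have h : x ^ (p + 2 * (((k + 1 : ℕ)) : ℝ)) = x ^ (p + 2 * (k : ℝ)) * x ^ 2 := by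
    rw [← rpow_natCast x 2, ← rpow_add hx]
    push_cast
    ring_nf
  rw [h, ← hrec k]
  ring

lemma serTerm_summable {p m : ℝ} (hp : 0 < p) (hm : 0 ≤ m) {a : ℕ → ℝ} (ha : ∀ k, 0 < a k)
    (hrec : ∀ k : ℕ, (p + 2 * ((k : ℝ) + 1)) * (p + 2 * ((k : ℝ) + 1) + 2 * m) * a (k + 1) = a k)
    {x : ℝ} (hx : 0 < x) : Summable (serTerm p a x) := by
  refine summable_of_ratio_norm_eventually_le (r := 1 / 2) (by norm_num) ?_
  filter_upwards [Filter.eventually_ge_atTop ⌈x ^ 2⌉₊] with k hk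
  have hk' : x ^ 2 ≤ k := (Nat.le_ceil _).trans (by exact_mod_cast hk)
  rw [norm_of_nonneg (serTerm_pos ha hx _).le, norm_of_nonneg (serTerm_pos ha hx _).le]
  have h1 := serTerm_rec hrec hx k
  have b0 := serTerm_pos (p := p) ha hx k
  have b1 := serTerm_pos (p := p) ha hx (k + 1)
  have hk0 : (0 : ℝ) ≤ k := Nat.cast_nonneg k
  have hmul : 2 * ((k : ℝ) + 1) ≤
      (p + 2 * ((k : ℝ) + 1)) * (p + 2 * ((k : ℝ) + 1) + 2 * m) := by
    nlinarith [mul_nonneg hp.le hk0, mul_nonneg hm hk0, mul_nonneg hp.le hm]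
  have h2 : 2 * ((k : ℝ) + 1) * serTerm p a x (k + 1) ≤ (k + 1) * serTerm p a x k := by
    calc _ ≤ _ := mul_le_mul_of_nonneg_right hmul b1.le
      _ = _ := h1
      _ ≤ _ := mul_le_mul_of_nonneg_right (by linarith) b0.le
  have hk1 : (0 : ℝ) < k + 1 := by linarith
  have h3 : ((k : ℝ) + 1) * (2 * serTerm p a x (k + 1)) ≤ (k + 1) * serTerm p a x k := by linarith
  have := le_of_mul_le_mul_left h3 hk1
  linarith

/-- The first moment is summable, and it differs from `x` times the zeroth moment by at most a
constant multiple of the latter; this is `f' - f = O(f / x)` for the sum `f` of the series. -/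
lemma moment_bound {p m : ℝ} (hp : 0 < p) (hm : 0 ≤ m) {a : ℕ → ℝ} (ha : ∀ k, 0 < a k)
    (hrec : ∀ k : ℕ, (p + 2 * ((k : ℝ) + 1)) * (p + 2 * ((k : ℝ) + 1) + 2 * m) * a (k + 1) = a k) :
    ∃ K : ℝ, ∀ x : ℝ, 1 ≤ x →
      Summable (fun k : ℕ => (p + 2 * (k : ℝ)) * serTerm p a x k) ∧
      |∑' k : ℕ, (p + 2 * (k : ℝ)) * serTerm p a x k - x * ∑' k, serTerm p a x k| ≤
        K * ∑' k, serTerm p a x k := by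
  set C := p * (p + 2 * m) with hC
  have hC0 : 0 ≤ C := by positivity
  refine ⟨C + 2 * m * (1 + C) + 1 + p ^ 3, fun x hx => ?_⟩
  have hx0 : 0 < x := by linarith
  set b := serTerm p a x with hb
  have bpos : ∀ k, 0 < b k := serTerm_pos ha hx0
  have brec := serTerm_rec hrec hx0
  rw [← hb] at brec
  have s0 : Summable b := serTerm_summable hp hm ha hrec hx0
  have npos : ∀ k : ℕ, 0 < p + 2 * (k : ℝ) := fun k => by positivity
  have c2 : ∀ k : ℕ, (p + 2 * ((k + 1 : ℕ) : ℝ)) ^ 2 * b (k + 1) ≤ x ^ 2 * b k := fun k => by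
    rw [← brec k]
    refine mul_le_mul_of_nonneg_right ?_ (bpos _).le
    push_cast
    have := npos k
    nlinarith
  have s2 : Summable (fun k : ℕ => (p + 2 * (k : ℝ)) ^ 2 * b k) := by
    rw [← summable_nat_add_iff 1]
    exact Summable.of_nonneg_of_le (fun k => mul_nonneg (sq_nonneg _) (bpos _).le) c2
      (s0.mul_left _)
  have s1 : Summable (fun k : ℕ => (p + 2 * (k : ℝ)) * b k) := by
    refine Summable.of_nonneg_of_le (fun k => mul_nonneg (npos k).le (bpos _).le) (fun k => ?_)
      (s0.add s2)
    nlinarith [bpos k, mul_nonneg (sq_nonneg (p + 2 * (k : ℝ) - 1)) (bpos k).le,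
      mul_pos (npos k) (bpos k)]
  have s1' : Summable (fun k : ℕ => x ^ 2 * ((p + 2 * (k : ℝ)) * b k + 2 * b k)) :=
    (s1.add (s0.mul_left 2)).mul_left _
  have c3 : ∀ k : ℕ, (p + 2 * ((k + 1 : ℕ) : ℝ)) ^ 3 * b (k + 1) ≤
      x ^ 2 * ((p + 2 * (k : ℝ)) * b k + 2 * b k) := fun k => by
    have h := mul_le_mul_of_nonneg_left (c2 k) (npos (k + 1)).le
    push_cast at h ⊢
    linarith
  have s3' : Summable (fun k : ℕ => (p + 2 * ((k + 1 : ℕ) : ℝ)) ^ 3 * b (k + 1)) :=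
    Summable.of_nonneg_of_le
      (fun k => mul_nonneg (pow_nonneg (npos _).le 3) (bpos _).le) c3 s1'
  have s3 : Summable (fun k : ℕ => (p + 2 * (k : ℝ)) ^ 3 * b k) := by
    rw [← summable_nat_add_iff 1]
    exact s3'
  refine ⟨s1, ?_⟩
  have e0 : b 0 ≤ ∑' k, b k := s0.le_tsum 0 fun k _ => (bpos k).le
  -- the second moment is determined by the lower ones through the recurrence
  have e2 : ∑' k : ℕ, (p + 2 * (k : ℝ)) ^ 2 * b k + 2 * m * ∑' k : ℕ, (p + 2 * (k : ℝ)) * b k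
      = C * b 0 + x ^ 2 * ∑' k, b k := by
    rw [← tsum_mul_left, ← tsum_mul_left, ← s2.tsum_add (s1.mul_left _),
      (s2.add (s1.mul_left (2 * m))).tsum_eq_zero_add]
    congr 1
    · simp [hC]; ring
    · refine tsum_congr fun k => ?_
      rw [← brec k]
      push_cast
      ring
  have e3 : ∑' k : ℕ, (p + 2 * (k : ℝ)) ^ 3 * b k ≤
      p ^ 3 * b 0 + x ^ 2 * (∑' k : ℕ, (p + 2 * (k : ℝ)) * b k + 2 * ∑' k, b k) := by
    rw [s3.tsum_eq_zero_add, ← tsum_mul_left (a := (2 : ℝ)), ← s1.tsum_add (s0.mul_left 2),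
      ← tsum_mul_left]
    have := s3'.tsum_le_tsum c3 s1'
    simpa using this
  have q2 : 0 ≤ ∑' k : ℕ, (p + 2 * (k : ℝ)) ^ 2 * b k
      - 2 * x * ∑' k : ℕ, (p + 2 * (k : ℝ)) * b k + x ^ 2 * ∑' k, b k := by
    rw [← tsum_mul_left, ← tsum_mul_left, ← s2.tsum_sub (s1.mul_left _),
      ← (s2.sub (s1.mul_left (2 * x))).tsum_add (s0.mul_left _)]
    refine tsum_nonneg fun k => ?_
    have := mul_nonneg (sq_nonneg (p + 2 * (k : ℝ) - x)) (bpos k).le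
    linarith
  have q3 : 0 ≤ ∑' k : ℕ, (p + 2 * (k : ℝ)) ^ 3 * b k
      - 2 * x * ∑' k : ℕ, (p + 2 * (k : ℝ)) ^ 2 * b k
      + x ^ 2 * ∑' k : ℕ, (p + 2 * (k : ℝ)) * b k := by
    rw [← tsum_mul_left, ← tsum_mul_left, ← s3.tsum_sub (s2.mul_left _),
      ← (s3.sub (s2.mul_left (2 * x))).tsum_add (s1.mul_left _)]
    refine tsum_nonneg fun k => ?_
    have := mul_nonneg (npos k).le
      (mul_nonneg (sq_nonneg (p + 2 * (k : ℝ) - x)) (bpos k).le)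
    linarith
  have hS1 : 0 ≤ ∑' k : ℕ, (p + 2 * (k : ℝ)) * b k :=
    tsum_nonneg fun k => mul_nonneg (npos k).le (bpos k).le
  have hS0 : 0 ≤ ∑' k, b k := tsum_nonneg fun k => (bpos k).le
  generalize ∑' k : ℕ, (p + 2 * (k : ℝ)) ^ 3 * b k = S3 at *
  generalize ∑' k : ℕ, (p + 2 * (k : ℝ)) ^ 2 * b k = S2 at *
  generalize ∑' k : ℕ, (p + 2 * (k : ℝ)) * b k = S1 at *
  generalize ∑' k, b k = S0 at *
  have hCb : C * b 0 ≤ C * S0 := mul_le_mul_of_nonneg_left e0 hC0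
  have hpb : p ^ 3 * b 0 ≤ p ^ 3 * S0 := mul_le_mul_of_nonneg_left e0 (by positivity)
  have hmS : 0 ≤ m * S1 := mul_nonneg hm hS1
  have up : S1 - x * S0 ≤ C * S0 := by
    have h1 : 2 * x * (S1 - x * S0) ≤ C * S0 := by linarith
    by_contra! hlt
    have : 0 ≤ C * S0 := mul_nonneg hC0 hS0
    nlinarith
  have hS1le : S1 ≤ (1 + C) * x * S0 := by
    have : C * S0 ≤ C * S0 * x := le_mul_of_one_le_right (mul_nonneg hC0 hS0) hx
    linarith
  have lo : x * S0 - S1 ≤ (2 * m * (1 + C) + 1 + p ^ 3) * S0 := by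
    have hmx : 0 ≤ 4 * m * x := by positivity
    have h1 := mul_le_mul_of_nonneg_left hS1le hmx
    have hx2 : 1 ≤ x ^ 2 := by nlinarith
    have h2 : p ^ 3 * S0 ≤ p ^ 3 * S0 * x ^ 2 :=
      le_mul_of_one_le_right (by positivity) hx2
    have h4 : x * S2 = x * (C * b 0 + x ^ 2 * S0 - 2 * m * S1) := by rw [← e2]; ring
    have h5 : 0 ≤ x * (C * b 0) := by have := bpos 0; positivity
    have h6 : 0 ≤ p ^ 3 * S0 * x ^ 2 := by positivity
    have h3 : x ^ 2 * (2 * (x * S0 - S1)) ≤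
        x ^ 2 * (2 * ((2 * m * (1 + C) + 1 + p ^ 3) * S0)) := by
      nlinarith
    have := le_of_mul_le_mul_left h3 (by positivity)
    linarith
  have z1 : 0 ≤ C * S0 := mul_nonneg hC0 hS0
  have z2 : 0 ≤ (2 * m * (1 + C) + 1 + p ^ 3) * S0 := by positivity
  rw [abs_le]
  constructor <;> linarith

/-! ### Regularity of the sum -/

lemma serTerm_continuous {p m : ℝ} (hp : 0 < p) (hm : 0 ≤ m) {a : ℕ → ℝ} (ha : ∀ k, 0 < a k)
    (hrec : ∀ k : ℕ, (p + 2 * ((k : ℝ) + 1)) * (p + 2 * ((k : ℝ) + 1) + 2 * m) * a (k + 1) = a k) :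
    Continuous (fun x => ∑' k, serTerm p a x k) := by
  rw [continuous_iff_continuousAt]
  intro x
  have hR : 0 < |x| + 1 := by positivity
  have : ContinuousOn (fun x => ∑' k, serTerm p a x k) (Metric.ball 0 (|x| + 1)) := by
    refine continuousOn_tsum (fun k => ?_) (serTerm_summable hp hm ha hrec hR) fun k y hy => ?_
    · exact ((continuous_rpow_const (by positivity)).const_mul (a k)).continuousOn
    · rw [mem_ball_zero_iff, norm_eq_abs] at hy
      rw [serTerm, serTerm, norm_mul, norm_of_nonneg (ha k).le, norm_eq_abs]
      refine mul_le_mul_of_nonneg_left ((abs_rpow_le_abs_rpow _ _).trans ?_) (ha k).le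
      exact rpow_le_rpow (abs_nonneg _) hy.le (by positivity)
  refine this.continuousAt (Metric.isOpen_ball.mem_nhds ?_)
  simp

lemma serTerm_hasDerivAt {p m : ℝ} (hp : 0 < p) (hm : 0 ≤ m) {a : ℕ → ℝ} (ha : ∀ k, 0 < a k)
    (hrec : ∀ k : ℕ, (p + 2 * ((k : ℝ) + 1)) * (p + 2 * ((k : ℝ) + 1) + 2 * m) * a (k + 1) = a k)
    {x : ℝ} (hx : 1 < x) :
    HasDerivAt (fun x => ∑' k, serTerm p a x k)
      ((∑' k : ℕ, (p + 2 * (k : ℝ)) * serTerm p a x k) / x) x := by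
  have hx0 : 0 < x := by linarith
  obtain ⟨K, hK⟩ := moment_bound hp hm ha hrec
  have key := hasDerivAt_tsum_of_isPreconnected
    (g := fun (k : ℕ) (y : ℝ) => serTerm p a y k)
    (g' := fun (k : ℕ) (y : ℝ) => (p + 2 * (k : ℝ)) * serTerm p a y k / y)
    (t := Set.Ioo 1 (x + 1)) (y₀ := x) (y := x)
    (hK (x + 1) (by linarith)).1 isOpen_Ioo isPreconnected_Ioo ?_ ?_ ⟨hx, by linarith⟩
    (serTerm_summable hp hm ha hrec hx0) ⟨hx, by linarith⟩
  · rwa [tsum_div_const] at key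
  · intro k y hy
    have hy0 : 0 < y := by linarith [hy.1]
    have h := (hasDerivAt_rpow_const (x := y) (p := p + 2 * (k : ℝ)) (Or.inl hy0.ne')).const_mul
      (a k)
    have e : (p + 2 * (k : ℝ)) * serTerm p a y k / y
        = a k * ((p + 2 * (k : ℝ)) * y ^ (p + 2 * (k : ℝ) - 1)) := by
      rw [rpow_sub_one hy0.ne', serTerm]
      ring
    rw [e]
    exact h
  · intro k y hy
    have hy0 : 0 < y := by linarith [hy.1]
    have hn : 0 < p + 2 * (k : ℝ) := by positivity
    have hb := serTerm_pos (p := p) ha hy0 k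
    rw [norm_of_nonneg (by positivity)]
    -- `y > 1` allows the factor `1 / y` to be dropped
    refine (div_le_self (by positivity) hy.1.le).trans ?_
    refine mul_le_mul_of_nonneg_left ?_ hn.le
    exact mul_le_mul_of_nonneg_left (rpow_le_rpow hy0.le hy.2.le hn.le) (ha k).le

/-! ### Asymptotics of an integral of a function of exponential growth -/

/-- A form of l'Hôpital's rule at infinity: if `G' = g` and `g' = (δ + O(1/x)) g` with `g, δ > 0`,
then `g / G → δ`, and a convergent perturbation `B` of `g` is harmless because `G → ∞`. -/
lemma tendsto_ratio {g g' G B : ℝ → ℝ} {δ K L : ℝ} (hδ : 0 < δ)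
    (hG : ∀ x > 1, HasDerivAt G (g x) x) (hg : ∀ x > 1, HasDerivAt g (g' x) x)
    (hpos : ∀ x > 1, 0 < g x) (hK : ∀ x > 1, |g' x - δ * g x| ≤ K / x * g x)
    (hB : Filter.Tendsto B Filter.atTop (nhds L)) :
    Filter.Tendsto (fun x => (1 / δ * (g x - B x)) / G x) Filter.atTop (nhds 1) := by
  have small : ∀ ε > 0, ∃ X > 1, ∀ x ≥ X, |g' x - δ * g x| ≤ ε * g x := by
    intro ε hε
    refine ⟨max 2 (K / ε), lt_of_lt_of_le (by norm_num) (le_max_left _ _), fun x hx => ?_⟩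
    have hx2 : 2 ≤ x := (le_max_left _ _).trans hx
    have hxK : K / ε ≤ x := (le_max_right _ _).trans hx
    have hx1 : 1 < x := by linarith
    refine (hK x hx1).trans (mul_le_mul_of_nonneg_right ?_ (hpos x hx1).le)
    rw [div_le_iff₀ hε] at hxK
    rw [div_le_iff₀ (by linarith)]
    linarith
  have mono : ∀ (F F' : ℝ → ℝ) (X : ℝ), (∀ x ≥ X, HasDerivAt F (F' x) x) →
      (∀ x ≥ X, 0 ≤ F' x) → ∀ x ≥ X, F X ≤ F x := by
    intro F F' X h1 h2 x hx
    have := monotoneOn_of_hasDerivWithinAt_nonneg (convex_Ici X)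
      (fun y hy => (h1 y hy).continuousAt.continuousWithinAt)
      (fun y hy => (h1 y (interior_subset hy)).hasDerivWithinAt)
      (fun y hy => h2 y (interior_subset hy))
    exact this (Set.mem_Ici.2 le_rfl) hx hx
  have Gtop : Filter.Tendsto G Filter.atTop Filter.atTop := by
    obtain ⟨X, hX, h⟩ := small δ hδ
    have hgX : ∀ x ≥ X, g X ≤ g x := by
      refine mono g g' X (fun x hx => hg x (by linarith)) fun x hx => ?_
      have := (abs_le.1 (h x hx)).1
      linarith
    have hGX : ∀ x ≥ X, G X - g X * X ≤ G x - g X * x := by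
      refine mono (fun x => G x - g X * x) (fun x => g x - g X * 1) X (fun x hx => ?_)
        fun x hx => ?_
      · exact (hG x (by linarith)).sub ((hasDerivAt_id x).const_mul (g X))
      · have := hgX x hx
        linarith
    refine Filter.tendsto_atTop_mono' _ ?_ (Filter.tendsto_atTop_add_const_left _ (G X - g X * X)
      (Filter.tendsto_id.const_mul_atTop (hpos X hX)))
    filter_upwards [Filter.eventually_ge_atTop X] with x hx
    have := hGX x hx
    simp only [id]
    linarith
  have lim : Filter.Tendsto (fun x => (g x - δ * G x) / G x) Filter.atTop (nhds 0) := by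
    rw [Metric.tendsto_nhds]
    intro ε hε
    obtain ⟨X, hX, h⟩ := small (ε / 2) (by linarith)
    have up : ∀ x ≥ X, ε / 2 * G X - (g X - δ * G X) ≤ ε / 2 * G x - (g x - δ * G x) := by
      refine mono (fun x => ε / 2 * G x - (g x - δ * G x))
        (fun x => ε / 2 * g x - (g' x - δ * g x)) X (fun x hx => ?_) fun x hx => ?_
      · have hx1 : x > 1 := by linarith
        exact ((hG x hx1).const_mul _).sub ((hg x hx1).sub ((hG x hx1).const_mul _))
      · have := (abs_le.1 (h x hx)).2
        linarith
    have lo : ∀ x ≥ X, ε / 2 * G X + (g X - δ * G X) ≤ ε / 2 * G x + (g x - δ * G x) := by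
      refine mono (fun x => ε / 2 * G x + (g x - δ * G x))
        (fun x => ε / 2 * g x + (g' x - δ * g x)) X (fun x hx => ?_) fun x hx => ?_
      · have hx1 : x > 1 := by linarith
        exact ((hG x hx1).const_mul _).add ((hg x hx1).sub ((hG x hx1).const_mul _))
      · have := (abs_le.1 (h x hx)).1
        linarith
    set c1 := ε / 2 * G X - (g X - δ * G X)
    set c2 := ε / 2 * G X + (g X - δ * G X)
    have big := Gtop.eventually_gt_atTop ((|c1| + |c2|) / (ε / 2))
    filter_upwards [big, Gtop.eventually_gt_atTop 0, Filter.eventually_ge_atTop X]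
      with x h1 h2 h3
    rw [dist_zero_right, norm_div, norm_of_nonneg h2.le, norm_eq_abs, div_lt_iff₀ h2, abs_lt]
    rw [div_lt_iff₀ (by linarith)] at h1
    have := up x h3
    have := lo x h3
    have := neg_abs_le c1
    have := neg_abs_le c2
    have := abs_nonneg c1
    have := abs_nonneg c2
    constructor <;> linarith
  have limB := hB.div_atTop Gtop
  have := ((lim.sub limB).const_mul (1 / δ)).add_const 1
  rw [sub_zero, mul_zero, zero_add] at this
  refine this.congr' ?_
  filter_upwards [Gtop.eventually_gt_atTop 0] with x hx
  field_simp
  ring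

/-! ### The modified Lommel function -/

/-- The coefficient of `x ^ (μ + ν + 1 + 2k)` in the expansion of `x ^ ν * lommel μ ν x`. -/
noncomputable def lommelCoeff (μ ν : ℝ) (k : ℕ) : ℝ :=
  (1 / 2 : ℝ) ^ (μ + 2 * (k : ℝ) + 1) /
    (Real.Gamma ((k : ℝ) + (μ - ν + 3) / 2) * Real.Gamma ((k : ℝ) + (μ + ν + 3) / 2))

lemma lommelCoeff_pos {μ ν : ℝ} (h1 : 0 < μ - ν + 3) (h2 : 0 < μ + ν + 3) (k : ℕ) :
    0 < lommelCoeff μ ν k := by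
  have := Gamma_pos_of_pos (show 0 < (k : ℝ) + (μ - ν + 3) / 2 by positivity)
  have := Gamma_pos_of_pos (show 0 < (k : ℝ) + (μ + ν + 3) / 2 by positivity)
  unfold lommelCoeff
  positivity

lemma lommelCoeff_rec {μ ν : ℝ} (h1 : 0 < μ - ν + 3) (h2 : 0 < μ + ν + 3) (k : ℕ) :
    (μ + ν + 1 + 2 * ((k : ℝ) + 1)) * (μ + ν + 1 + 2 * ((k : ℝ) + 1) + 2 * (-ν)) *
      lommelCoeff μ ν (k + 1) = lommelCoeff μ ν k := by
  have p1 : 0 < (k : ℝ) + (μ - ν + 3) / 2 := by positivity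
  have p2 : 0 < (k : ℝ) + (μ + ν + 3) / 2 := by positivity
  have g1 := (Gamma_pos_of_pos p1).ne'
  have g2 := (Gamma_pos_of_pos p2).ne'
  have e1 : ((k + 1 : ℕ) : ℝ) + (μ - ν + 3) / 2 = ((k : ℝ) + (μ - ν + 3) / 2) + 1 := by
    push_cast; ring
  have e2 : ((k + 1 : ℕ) : ℝ) + (μ + ν + 3) / 2 = ((k : ℝ) + (μ + ν + 3) / 2) + 1 := by
    push_cast; ring
  have e3 : (1 / 2 : ℝ) ^ (μ + 2 * ((k + 1 : ℕ) : ℝ) + 1) =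
      (1 / 2 : ℝ) ^ (μ + 2 * (k : ℝ) + 1) * (1 / 4) := by
    rw [show μ + 2 * ((k + 1 : ℕ) : ℝ) + 1 = (μ + 2 * (k : ℝ) + 1) + (2 : ℕ) by push_cast; ring,
      rpow_add (by norm_num), rpow_natCast]
    norm_num
  have f1 : μ + ν + 1 + 2 * ((k : ℝ) + 1) = 2 * ((k : ℝ) + (μ + ν + 3) / 2) := by ring
  have f2 : 2 * ((k : ℝ) + (μ + ν + 3) / 2) + 2 * (-ν) = 2 * ((k : ℝ) + (μ - ν + 3) / 2) := by ring
  unfold lommelCoeff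
  rw [e1, e2, e3, Gamma_add_one p1.ne', Gamma_add_one p2.ne', f1, f2]
  generalize (k : ℝ) + (μ - ν + 3) / 2 = A at *
  generalize (k : ℝ) + (μ + ν + 3) / 2 = B at *
  have := p1.ne'
  have := p2.ne'
  field_simp
  norm_num

lemma rpow_mul_lommel {μ ν x : ℝ} (hx : 0 < x) :
    x ^ ν * lommel μ ν x = ∑' k, serTerm (μ + ν + 1) (lommelCoeff μ ν) x k := by
  unfold lommel
  rw [← tsum_mul_left]
  refine tsum_congr fun k => ?_
  unfold serTerm lommelCoeff
  rw [show x / 2 = x * (1 / 2) by ring, mul_rpow hx.le (by norm_num),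
    show μ + ν + 1 + 2 * (k : ℝ) = ν + (μ + 2 * (k : ℝ) + 1) by ring, rpow_add hx ν]
  ring

lemma tendsto_Bconst {μ ν β : ℝ} (hβ : 0 < β) (h : 0 < μ + ν + 1) :
    ∃ L, Filter.Tendsto (Bconst μ ν β) Filter.atTop (nhds L) := by
  have h1 := intervalIntegral_tendsto_integral_Ioi 0 (GammaIntegral_convergent h)
    (Filter.tendsto_id.const_mul_atTop hβ)
  exact ⟨_, (h1.const_mul (β ^ (-μ - ν - 1))).div_const
    (2 ^ μ * Real.Gamma ((μ - ν + 1) / 2) * Real.Gamma ((μ + ν + 3) / 2))⟩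

theorem stmt16 (μ ν β : ℝ) (hμ : μ > -1) (hν1 : -μ - 1 < ν) (hν2 : ν ≤ 0)
    (hβ1 : 0 < β) (hβ2 : β < 1) :
    Filter.Tendsto
      (fun x : ℝ =>
        (1 / (1 - β) * (Real.exp (-β * x) * x ^ ν * lommel μ ν x - Bconst μ ν β x)) /
          (∫ u in (0:ℝ)..x, Real.exp (-β * u) * u ^ ν * lommel μ ν u))
      Filter.atTop (nhds 1) := by
  have hp : 0 < μ + ν + 1 := by linarith
  have hm : 0 ≤ -ν := by linarith
  have h1 : 0 < μ - ν + 3 := by linarith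
  have h2 : 0 < μ + ν + 3 := by linarith
  have ha := lommelCoeff_pos h1 h2
  have hrec := lommelCoeff_rec h1 h2
  set f : ℝ → ℝ := fun x => ∑' k, serTerm (μ + ν + 1) (lommelCoeff μ ν) x k with hf
  have hcont : Continuous f := serTerm_continuous hp hm ha hrec
  have hderiv := fun x (hx : 1 < x) => serTerm_hasDerivAt hp hm ha hrec hx
  have hfpos : ∀ x > 0, 0 < f x := fun x hx =>
    (serTerm_summable hp hm ha hrec hx).tsum_pos (fun k => (serTerm_pos ha hx k).le) 0
      (serTerm_pos ha hx 0)
  have hlom : ∀ x > 0, Real.exp (-β * x) * x ^ ν * lommel μ ν x = Real.exp (-β * x) * f x :=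
    fun x hx => by rw [mul_assoc, rpow_mul_lommel hx]
  obtain ⟨L, hL⟩ := tendsto_Bconst (μ := μ) (ν := ν) hβ1 hp
  obtain ⟨K, hK⟩ := moment_bound hp hm ha hrec
  have hgc : Continuous fun x => Real.exp (-β * x) * f x := by fun_prop
  have hexp : ∀ x : ℝ, HasDerivAt (fun x => Real.exp (-β * x)) (Real.exp (-β * x) * (-β * 1)) x :=
    fun x => ((hasDerivAt_id x).const_mul (-β)).exp
  have key := tendsto_ratio (δ := 1 - β) (K := K) (by linarith)
    (fun x _ => intervalIntegral.integral_hasDerivAt_right (hgc.intervalIntegrable 0 x)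
      (hgc.stronglyMeasurableAtFilter _ _) hgc.continuousAt)
    (fun x hx => (hexp x).mul (hderiv x hx))
    (fun x hx => mul_pos (exp_pos _) (hfpos x (by linarith))) ?_ hL
  · refine key.congr' ?_
    filter_upwards [Filter.eventually_gt_atTop 0] with x hx
    rw [hlom x hx]
    congr 1
    refine intervalIntegral.integral_congr_ae (Filter.Eventually.of_forall fun u hu => ?_)
    rw [Set.uIoc_of_le hx.le] at hu
    exact (hlom u hu.1).symm
  · intro x hx
    have hx0 : 0 < x := by linarith
    have hb := (hK x hx.le).2
    change |_ - x * f x| ≤ K * f x at hb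
    change |Real.exp (-β * x) * (-β * 1) * f x + Real.exp (-β * x) * (_ / x)
      - (1 - β) * (Real.exp (-β * x) * f x)| ≤ K / x * (Real.exp (-β * x) * f x)
    generalize (∑' k : ℕ, (μ + ν + 1 + 2 * (k : ℝ)) *
      serTerm (μ + ν + 1) (lommelCoeff μ ν) x k) = S at *
    have e : Real.exp (-β * x) * (-β * 1) * f x + Real.exp (-β * x) * (S / x)
        - (1 - β) * (Real.exp (-β * x) * f x) = Real.exp (-β * x) / x * (S - x * f x) := by
      field_simp
      ring
    rw [e, abs_mul, abs_of_pos (by positivity)]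
    refine (mul_le_mul_of_nonneg_left hb (by positivity)).trans (le_of_eq ?_)
    ring
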